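/- Let k ∈ (0,1) and define, for α ∈ (0, K(k)), κ(α) := Z(α;k) + k·sn(α;k)·cn(α;k)·dn(α;k)/(1 + k·sn(α;k)²) and ζ(α) := ((1+k)/2)·(1 − k·sn(α;k)²)/(1 + k·sn(α;k)²). Then κ is differentiable on (0, K(k)) and there is exactly one point α₀ ∈ (0, K(k)) with κ'(α₀) = 0; at this point ζ(α₀) = √(E(k)/(2K(k)) − (1−k²)/4); moreover κ attains its global maximum over (0, K(k)) at α₀, being strictly monotone on each of (0, α₀) and (α₀, K(k)). -/

import Mathlib

noncomputable section

/-- The complete elliptic integral of the first kind. -/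
def Kcomp (k : ℝ) : ℝ :=
  ∫ θ in (0 : ℝ)..(Real.pi / 2), (Real.sqrt (1 - k ^ 2 * Real.sin θ ^ 2))⁻¹

/-- The complete elliptic integral of the second kind. -/
def Ecomp (k : ℝ) : ℝ :=
  ∫ θ in (0 : ℝ)..(Real.pi / 2), Real.sqrt (1 - k ^ 2 * Real.sin θ ^ 2)

/-- The Jacobi zeta function `Z(α;k) = ∫₀^α dn(t;k)² dt − (E/K)·α`. -/
def Zjac (k : ℝ) (dn : ℝ → ℝ) (α : ℝ) : ℝ :=
  (∫ t in (0 : ℝ)..α, (dn t) ^ 2) - (Ecomp k / Kcomp k) * α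

/-- The inverse localization width of the dark breather,
`κ(α) = Z(α;k) + k·sn(α)cn(α)dn(α)/(1 + k·sn²(α))`. -/
def kapWidth (k : ℝ) (sn cn dn : ℝ → ℝ) (α : ℝ) : ℝ :=
  Zjac k dn α + k * sn α * cn α * dn α / (1 + k * (sn α) ^ 2)

/-- The spectral parameter determined by the characteristic equation,
`ζ(α) = ((1+k)/2)(1 − k·sn²(α))/(1 + k·sn²(α))`. -/
def zetaChar (k : ℝ) (sn : ℝ → ℝ) (α : ℝ) : ℝ :=
  ((1 + k) / 2) * (1 - k * (sn α) ^ 2) / (1 + k * (sn α) ^ 2)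

/-!
With the amplitude `am t = ∫₀ᵗ dn` one has `sn = sin ∘ am` and `F (am t) = t` for the incomplete
elliptic integral `F`, so `sn` increases strictly from `0` to `1` on `[0, K]` and `ζ` decreases
strictly from `(1 + k) / 2` to `(1 - k) / 2`. The width satisfies
`κ' = 2 (ζ² - (E / (2 K) - (1 - k²) / 4))`, so `κ'` is strictly decreasing on `[0, K]`. The bounds
`1 - k² ≤ E / K ≤ 1` put `E / (2 K) - (1 - k²) / 4` strictly between `((1 - k) / 2)²` and
`((1 + k) / 2)²`, so `κ'` vanishes exactly once, changing sign from plus to minus.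
-/

open Set Real

section Calculus

theorem eq_of_hasDerivAt_zero {F : Type*} [NormedAddCommGroup F] [NormedSpace ℝ F] {f : ℝ → F}
    (hf : ∀ x, HasDerivAt f 0 x) (x y : ℝ) : f x = f y :=
  is_const_of_deriv_eq_zero (fun x => (hf x).differentiableAt) (fun x => (hf x).deriv) x y

theorem isMaxOn_Icc_of_monotoneOn_of_antitoneOn {α β : Type*} [LinearOrder α] [Preorder β]
    {f : α → β} {a b c : α} (hmono : MonotoneOn f (Icc a c)) (hanti : AntitoneOn f (Icc c b)) :
    IsMaxOn f (Icc a b) c := by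
  intro x hx
  rcases le_total x c with hxc | hcx
  · exact hmono ⟨hx.1, hxc⟩ ⟨hx.1.trans hxc, le_rfl⟩ hxc
  · exact hanti ⟨le_rfl, hcx.trans hx.2⟩ ⟨hcx, hx.2⟩ hcx

variable {f : ℝ → ℝ} {a b c : ℝ}

theorem strictMonoOn_Icc_of_strictAntiOn_deriv (hf : ContinuousOn f (Icc a c))
    (hf' : StrictAntiOn (deriv f) (Icc a c)) (hc : 0 ≤ deriv f c) : StrictMonoOn f (Icc a c) := by
  refine strictMonoOn_of_deriv_pos (convex_Icc a c) hf fun x hx => ?_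
  rw [interior_Icc] at hx
  exact hc.trans_lt (hf' (Ioo_subset_Icc_self hx) ⟨hx.1.le.trans hx.2.le, le_rfl⟩ hx.2)

theorem strictAntiOn_Icc_of_strictAntiOn_deriv (hf : ContinuousOn f (Icc c b))
    (hf' : StrictAntiOn (deriv f) (Icc c b)) (hc : deriv f c ≤ 0) : StrictAntiOn f (Icc c b) := by
  refine strictAntiOn_of_deriv_neg (convex_Icc c b) hf fun x hx => ?_
  rw [interior_Icc] at hx
  exact (hf' ⟨le_rfl, hx.1.le.trans hx.2.le⟩ (Ioo_subset_Icc_self hx) hx.1).trans_le hc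

theorem exists_deriv_eq_zero_strictMonoOn_strictAntiOn (hab : a ≤ b)
    (hf : ∀ x ∈ Icc a b, DifferentiableAt ℝ f x) (hf' : StrictAntiOn (deriv f) (Icc a b))
    (ha : 0 < deriv f a) (hb : deriv f b < 0) :
    ∃ c ∈ Ioo a b, deriv f c = 0 ∧ StrictMonoOn f (Icc a c) ∧ StrictAntiOn f (Icc c b) := by
  -- Darboux: being a derivative, `deriv f` takes the intermediate value `0` without continuity.
  obtain ⟨c, hc, hc0⟩ := exists_hasDerivWithinAt_eq_of_lt_of_gt hab
    (fun x hx => (hf x hx).hasDerivAt.hasDerivWithinAt) ha hb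
  have hcont : ContinuousOn f (Icc a b) :=
    fun x hx => (hf x hx).continuousAt.continuousWithinAt
  have hleft : Icc a c ⊆ Icc a b := Icc_subset_Icc_right hc.2.le
  have hright : Icc c b ⊆ Icc a b := Icc_subset_Icc_left hc.1.le
  exact ⟨c, hc, hc0,
    strictMonoOn_Icc_of_strictAntiOn_deriv (hcont.mono hleft) (hf'.mono hleft) hc0.ge,
    strictAntiOn_Icc_of_strictAntiOn_deriv (hcont.mono hright) (hf'.mono hright) hc0.le⟩

end Calculus

theorem strictAntiOn_one_sub_div_one_add {𝕜 : Type*} [Field 𝕜] [LinearOrder 𝕜]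
    [IsStrictOrderedRing 𝕜] : StrictAntiOn (fun y : 𝕜 => (1 - y) / (1 + y)) (Ioi (-1)) := by
  intro x hx y hy hxy
  have hx' : 0 < 1 + x := neg_lt_iff_pos_add'.mp hx
  have hy' : 0 < 1 + y := neg_lt_iff_pos_add'.mp hy
  change (1 - y) / (1 + y) < (1 - x) / (1 + x)
  rw [div_lt_div_iff₀ hy' hx']
  linarith

theorem one_sub_mul_sin_sq_pos {m : ℝ} (hm : m < 1) (θ : ℝ) : 0 < 1 - m * sin θ ^ 2 := by
  rcases le_total m 0 with hm0 | hm0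
  · linarith [mul_nonpos_of_nonpos_of_nonneg hm0 (sq_nonneg (sin θ))]
  · linarith [mul_le_of_le_one_right hm0 (sin_sq_le_one θ)]

section EllipticIntegrals

/-- The incomplete elliptic integral of the first kind `F(φ; k)`, as a function of the modulus `k`
and the amplitude `φ`; it inverts the Jacobi amplitude. -/
def ellipticF (k φ : ℝ) : ℝ :=
  ∫ θ in (0 : ℝ)..φ, (√(1 - k ^ 2 * sin θ ^ 2))⁻¹

variable {k : ℝ}

theorem ellipticF_zero (k : ℝ) : ellipticF k 0 = 0 :=
  intervalIntegral.integral_same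

theorem ellipticF_pi_div_two (k : ℝ) : ellipticF k (π / 2) = Kcomp k :=
  rfl

theorem sqrt_one_sub_sq_mul_sin_sq_pos (hk : k ^ 2 < 1) (θ : ℝ) :
    0 < √(1 - k ^ 2 * sin θ ^ 2) :=
  sqrt_pos.2 (one_sub_mul_sin_sq_pos hk θ)

theorem continuous_inv_sqrt_one_sub_sq_mul_sin_sq (hk : k ^ 2 < 1) :
    Continuous fun θ : ℝ => (√(1 - k ^ 2 * sin θ ^ 2))⁻¹ :=
  Continuous.inv₀ (by fun_prop) fun θ => (sqrt_one_sub_sq_mul_sin_sq_pos hk θ).ne'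

theorem hasDerivAt_ellipticF (hk : k ^ 2 < 1) (φ : ℝ) :
    HasDerivAt (ellipticF k) (√(1 - k ^ 2 * sin φ ^ 2))⁻¹ φ :=
  ((continuous_inv_sqrt_one_sub_sq_mul_sin_sq hk).integral_hasStrictDerivAt 0 φ).hasDerivAt

theorem strictMono_ellipticF (hk : k ^ 2 < 1) : StrictMono (ellipticF k) :=
  strictMono_of_hasDerivAt_pos (hasDerivAt_ellipticF hk)
    fun φ => inv_pos.2 (sqrt_one_sub_sq_mul_sin_sq_pos hk φ)

theorem Kcomp_pos (hk : k ^ 2 < 1) : 0 < Kcomp k := by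
  rw [← ellipticF_zero k, ← ellipticF_pi_div_two]
  exact strictMono_ellipticF hk pi_div_two_pos

theorem Ecomp_le_Kcomp (hk : k ^ 2 < 1) : Ecomp k ≤ Kcomp k := by
  refine intervalIntegral.integral_mono pi_div_two_pos.le
    (Continuous.intervalIntegrable (by fun_prop) _ _)
    ((continuous_inv_sqrt_one_sub_sq_mul_sin_sq hk).intervalIntegrable _ _) fun θ => ?_
  have hle : √(1 - k ^ 2 * sin θ ^ 2) ≤ 1 :=
    sqrt_le_one.2 (sub_le_self 1 (by positivity))
  exact hle.trans (one_le_inv_iff₀.2 ⟨sqrt_one_sub_sq_mul_sin_sq_pos hk θ, hle⟩)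

theorem one_sub_sq_mul_Kcomp_le_Ecomp (hk : k ^ 2 < 1) : (1 - k ^ 2) * Kcomp k ≤ Ecomp k := by
  unfold Kcomp
  rw [← intervalIntegral.integral_const_mul]
  refine intervalIntegral.integral_mono pi_div_two_pos.le
    (((continuous_inv_sqrt_one_sub_sq_mul_sin_sq hk).const_mul _).intervalIntegrable _ _)
    (Continuous.intervalIntegrable (by fun_prop) _ _) fun θ => ?_
  have hpos := sqrt_one_sub_sq_mul_sin_sq_pos hk θ
  rw [← div_eq_mul_inv, div_le_iff₀ hpos, mul_self_sqrt (one_sub_mul_sin_sq_pos hk θ).le]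
  exact sub_le_sub_left (mul_le_of_le_one_right (sq_nonneg k) (sin_sq_le_one θ)) 1

/-- The squared spectral parameter `ζ(α₀)²` at the critical point of the inverse width. -/
def criticalZetaSq (k : ℝ) : ℝ :=
  Ecomp k / (2 * Kcomp k) - (1 - k ^ 2) / 4

theorem criticalZetaSq_mem_Ioo (hk : k ∈ Ioo (0 : ℝ) 1) :
    criticalZetaSq k ∈ Ioo (((1 - k) / 2) ^ 2) (((1 + k) / 2) ^ 2) := by
  have hk2 : k ^ 2 < k := pow_lt_self_of_lt_one₀ hk.1 hk.2 one_lt_two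
  have hk1 : k ^ 2 < 1 := hk2.trans hk.2
  have hK := Kcomp_pos hk1
  have hlower : 1 - k ^ 2 ≤ Ecomp k / Kcomp k :=
    (le_div_iff₀ hK).2 (one_sub_sq_mul_Kcomp_le_Ecomp hk1)
  have hupper : Ecomp k / Kcomp k ≤ 1 := (div_le_one₀ hK).2 (Ecomp_le_Kcomp hk1)
  have hcrit : criticalZetaSq k = Ecomp k / Kcomp k / 2 - (1 - k ^ 2) / 4 := by
    rw [criticalZetaSq, div_div, mul_comm 2]
  rw [hcrit]
  constructor <;> linarith [hk.1]

end EllipticIntegrals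

/-- The Jacobi elliptic functions `sn`, `cn`, `dn` of modulus `k`, characterised as the solution of
their initial value problem. -/
structure IsJacobiTriple (k : ℝ) (sn cn dn : ℝ → ℝ) : Prop where
  hasDerivAt_sn : ∀ x, HasDerivAt sn (cn x * dn x) x
  hasDerivAt_cn : ∀ x, HasDerivAt cn (-(sn x * dn x)) x
  hasDerivAt_dn : ∀ x, HasDerivAt dn (-(k ^ 2 * sn x * cn x)) x
  sn_zero : sn 0 = 0
  cn_zero : cn 0 = 1
  dn_zero : dn 0 = 1

/-- The Jacobi amplitude `am t = ∫₀ᵗ dn`, the angle for which `sn = sin ∘ am`. -/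
def jacobiAm (dn : ℝ → ℝ) (t : ℝ) : ℝ :=
  ∫ u in (0 : ℝ)..t, dn u

theorem jacobiAm_zero (dn : ℝ → ℝ) : jacobiAm dn 0 = 0 :=
  intervalIntegral.integral_same

theorem hasDerivAt_jacobiAm {dn : ℝ → ℝ} (hdn : Continuous dn) (t : ℝ) :
    HasDerivAt (jacobiAm dn) (dn t) t :=
  (hdn.integral_hasStrictDerivAt 0 t).hasDerivAt

theorem hasDerivAt_Zjac (k : ℝ) {dn : ℝ → ℝ} (hdn : Continuous dn) (α : ℝ) :
    HasDerivAt (Zjac k dn) (dn α ^ 2 - Ecomp k / Kcomp k) α :=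
  ((hdn.pow 2).integral_hasStrictDerivAt 0 α).hasDerivAt.sub
    (hasDerivAt_const_mul (Ecomp k / Kcomp k))

namespace IsJacobiTriple

variable {k : ℝ} {sn cn dn : ℝ → ℝ}

theorem continuous_dn (h : IsJacobiTriple k sn cn dn) : Continuous dn :=
  continuous_iff_continuousAt.2 fun x => (h.hasDerivAt_dn x).continuousAt

theorem cn_sq (h : IsJacobiTriple k sn cn dn) (x : ℝ) : cn x ^ 2 = 1 - sn x ^ 2 := by
  have hderiv (t : ℝ) : HasDerivAt (fun t => cn t ^ 2 + sn t ^ 2) 0 t := by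
    refine (((h.hasDerivAt_cn t).pow 2).add ((h.hasDerivAt_sn t).pow 2)).congr_deriv ?_
    ring
  apply eq_sub_of_add_eq
  simpa [h.sn_zero, h.cn_zero] using eq_of_hasDerivAt_zero hderiv x 0

theorem dn_sq (h : IsJacobiTriple k sn cn dn) (x : ℝ) : dn x ^ 2 = 1 - k ^ 2 * sn x ^ 2 := by
  have hderiv (t : ℝ) : HasDerivAt (fun t => dn t ^ 2 + k ^ 2 * sn t ^ 2) 0 t := by
    refine (((h.hasDerivAt_dn t).pow 2).add
      (((h.hasDerivAt_sn t).pow 2).const_mul (k ^ 2))).congr_deriv ?_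
    ring
  apply eq_sub_of_add_eq
  simpa [h.sn_zero, h.dn_zero] using eq_of_hasDerivAt_zero hderiv x 0

theorem sn_eq_sin_jacobiAm (h : IsJacobiTriple k sn cn dn) (x : ℝ) :
    sn x = sin (jacobiAm dn x) := by
  have ham := hasDerivAt_jacobiAm h.continuous_dn
  -- The unit vectors `(cn, sn)` and `(cos am, sin am)` rotate at the same speed `dn`, so their
  -- inner product stays `1` and they coincide.
  have hderiv (t : ℝ) : HasDerivAt
      (fun t => sn t * sin (jacobiAm dn t) + cn t * cos (jacobiAm dn t)) 0 t := by
    refine (((h.hasDerivAt_sn t).mul (ham t).sin).add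
      ((h.hasDerivAt_cn t).mul (ham t).cos)).congr_deriv ?_
    ring
  have hinner : sn x * sin (jacobiAm dn x) + cn x * cos (jacobiAm dn x) = 1 := by
    simpa [h.sn_zero, h.cn_zero, jacobiAm_zero] using eq_of_hasDerivAt_zero hderiv x 0
  have hdist : (sn x - sin (jacobiAm dn x)) ^ 2 + (cn x - cos (jacobiAm dn x)) ^ 2 = 0 := by
    linear_combination h.cn_sq x + sin_sq_add_cos_sq (jacobiAm dn x) - 2 * hinner
  exact sub_eq_zero.1 (pow_eq_zero_iff two_ne_zero |>.1
    ((add_eq_zero_iff_of_nonneg (sq_nonneg _) (sq_nonneg _)).1 hdist).1)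

theorem one_sub_mul_sn_sq_pos (h : IsJacobiTriple k sn cn dn) {m : ℝ} (hm : m < 1) (x : ℝ) :
    0 < 1 - m * sn x ^ 2 := by
  rw [h.sn_eq_sin_jacobiAm]
  exact one_sub_mul_sin_sq_pos hm _

theorem one_add_mul_sn_sq_pos (h : IsJacobiTriple k sn cn dn) {m : ℝ} (hm : -1 < m) (x : ℝ) :
    0 < 1 + m * sn x ^ 2 := by
  simpa using h.one_sub_mul_sn_sq_pos (neg_lt.1 hm) x

theorem dn_pos (h : IsJacobiTriple k sn cn dn) (hk : k ^ 2 < 1) (x : ℝ) : 0 < dn x := by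
  have hne (y : ℝ) : dn y ≠ 0 := by
    have hsq : 0 < dn y ^ 2 := by
      rw [h.dn_sq]
      exact h.one_sub_mul_sn_sq_pos hk y
    exact pow_ne_zero_iff two_ne_zero |>.1 hsq.ne'
  by_contra! hx
  obtain ⟨y, hy⟩ := mem_range_of_exists_le_of_exists_ge h.continuous_dn ⟨x, hx⟩
    ⟨0, h.dn_zero ▸ zero_le_one⟩
  exact hne y hy

theorem strictMono_jacobiAm (h : IsJacobiTriple k sn cn dn) (hk : k ^ 2 < 1) :
    StrictMono (jacobiAm dn) :=
  strictMono_of_hasDerivAt_pos (hasDerivAt_jacobiAm h.continuous_dn) (h.dn_pos hk)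

theorem ellipticF_jacobiAm (h : IsJacobiTriple k sn cn dn) (hk : k ^ 2 < 1) (t : ℝ) :
    ellipticF k (jacobiAm dn t) = t := by
  have hderiv (x : ℝ) : HasDerivAt (fun x => ellipticF k (jacobiAm dn x) - x) 0 x := by
    refine (((hasDerivAt_ellipticF hk (jacobiAm dn x)).comp x
      (hasDerivAt_jacobiAm h.continuous_dn x)).sub (hasDerivAt_id x)).congr_deriv ?_
    rw [← h.sn_eq_sin_jacobiAm, ← h.dn_sq, sqrt_sq (h.dn_pos hk x).le,
      inv_mul_cancel₀ (h.dn_pos hk x).ne', sub_self]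
  have hconst := eq_of_hasDerivAt_zero hderiv t 0
  simp only [jacobiAm_zero, ellipticF_zero, sub_zero] at hconst
  exact sub_eq_zero.1 hconst

theorem jacobiAm_Kcomp (h : IsJacobiTriple k sn cn dn) (hk : k ^ 2 < 1) :
    jacobiAm dn (Kcomp k) = π / 2 :=
  (strictMono_ellipticF hk).injective <| by
    rw [h.ellipticF_jacobiAm hk, ellipticF_pi_div_two]

theorem sn_Kcomp (h : IsJacobiTriple k sn cn dn) (hk : k ^ 2 < 1) : sn (Kcomp k) = 1 := by
  rw [h.sn_eq_sin_jacobiAm, h.jacobiAm_Kcomp hk, sin_pi_div_two]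

theorem strictMonoOn_sn (h : IsJacobiTriple k sn cn dn) (hk : k ^ 2 < 1) :
    StrictMonoOn sn (Icc 0 (Kcomp k)) := by
  have ham := h.strictMono_jacobiAm hk
  have hmaps : MapsTo (jacobiAm dn) (Icc 0 (Kcomp k)) (Icc (-(π / 2)) (π / 2)) := by
    refine (ham.monotone.mapsTo_Icc).mono_right ?_
    rw [jacobiAm_zero, h.jacobiAm_Kcomp hk]
    exact Icc_subset_Icc_left (neg_nonpos.2 pi_div_two_pos.le)
  rw [funext h.sn_eq_sin_jacobiAm]
  exact strictMonoOn_sin.comp (ham.strictMonoOn _) hmaps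

theorem strictMonoOn_sn_sq (h : IsJacobiTriple k sn cn dn) (hk : k ^ 2 < 1) :
    StrictMonoOn (fun α => sn α ^ 2) (Icc 0 (Kcomp k)) := by
  intro α hα β hβ hαβ
  have hsn := h.strictMonoOn_sn hk
  have hα0 : 0 ≤ sn α :=
    h.sn_zero ▸ hsn.monotoneOn (left_mem_Icc.2 (hα.1.trans hα.2)) hα hα.1
  exact pow_lt_pow_left₀ (hsn hα hβ hαβ) hα0 two_ne_zero

theorem zetaChar_zero (h : IsJacobiTriple k sn cn dn) : zetaChar k sn 0 = (1 + k) / 2 := by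
  simp [zetaChar, h.sn_zero]

theorem zetaChar_Kcomp (h : IsJacobiTriple k sn cn dn) (hk : k ∈ Ioo (-1 : ℝ) 1) :
    zetaChar k sn (Kcomp k) = (1 - k) / 2 := by
  have hk1 : 1 + k ≠ 0 := (neg_lt_iff_pos_add'.1 hk.1).ne'
  rw [zetaChar, h.sn_Kcomp ((sq_lt_one_iff_abs_lt_one k).2 (abs_lt.2 hk))]
  field_simp

theorem zetaChar_pos (h : IsJacobiTriple k sn cn dn) (hk : k ∈ Ioo (-1 : ℝ) 1) (α : ℝ) :
    0 < zetaChar k sn α :=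
  div_pos (mul_pos (half_pos (neg_lt_iff_pos_add'.1 hk.1)) (h.one_sub_mul_sn_sq_pos hk.2 α))
    (h.one_add_mul_sn_sq_pos hk.1 α)

theorem strictAntiOn_zetaChar (h : IsJacobiTriple k sn cn dn) (hk : k ∈ Ioo (0 : ℝ) 1) :
    StrictAntiOn (zetaChar k sn) (Icc 0 (Kcomp k)) := by
  intro α hα β hβ hαβ
  have hmem (x : ℝ) : k * sn x ^ 2 ∈ Ioi (-1 : ℝ) :=
    neg_one_lt_zero.trans_le (mul_nonneg hk.1.le (sq_nonneg _))
  have hlt : k * sn α ^ 2 < k * sn β ^ 2 :=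
    mul_lt_mul_of_pos_left
      (h.strictMonoOn_sn_sq (pow_lt_one₀ hk.1.le hk.2 two_ne_zero) hα hβ hαβ) hk.1
  rw [zetaChar, zetaChar, mul_div_assoc, mul_div_assoc]
  exact mul_lt_mul_of_pos_left (strictAntiOn_one_sub_div_one_add (hmem α) (hmem β) hlt)
    (by linarith [hk.1])

theorem hasDerivAt_sn_mul_cn_mul_dn (h : IsJacobiTriple k sn cn dn) (x : ℝ) :
    HasDerivAt (fun t => sn t * cn t * dn t)
      (1 - 2 * (1 + k ^ 2) * sn x ^ 2 + 3 * k ^ 2 * sn x ^ 4) x := by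
  refine (((h.hasDerivAt_sn x).mul (h.hasDerivAt_cn x)).mul (h.hasDerivAt_dn x)).congr_deriv ?_
  calc (cn x * dn x * cn x + sn x * -(sn x * dn x)) * dn x
        + sn x * cn x * -(k ^ 2 * sn x * cn x)
      = cn x ^ 2 * dn x ^ 2 - sn x ^ 2 * dn x ^ 2 - k ^ 2 * sn x ^ 2 * cn x ^ 2 := by ring
    _ = 1 - 2 * (1 + k ^ 2) * sn x ^ 2 + 3 * k ^ 2 * sn x ^ 4 := by
      rw [h.cn_sq, h.dn_sq]; ring

theorem hasDerivAt_kapWidth (h : IsJacobiTriple k sn cn dn) {x : ℝ} (hx : 1 + k * sn x ^ 2 ≠ 0) :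
    HasDerivAt (kapWidth k sn cn dn) (2 * (zetaChar k sn x ^ 2 - criticalZetaSq k)) x := by
  have hκ : kapWidth k sn cn dn =
      fun t => Zjac k dn t + k * (sn t * cn t * dn t) / (1 + k * sn t ^ 2) := by
    funext t
    rw [kapWidth, mul_assoc, mul_assoc, mul_assoc]
  have hden : HasDerivAt (fun t => 1 + k * sn t ^ 2) (k * (2 * sn x * (cn x * dn x))) x := by
    simpa using (((h.hasDerivAt_sn x).pow 2).const_mul k).const_add 1
  rw [hκ]
  refine ((hasDerivAt_Zjac k h.continuous_dn x).add
    (((h.hasDerivAt_sn_mul_cn_mul_dn x).const_mul k).div hden hx)).congr_deriv ?_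
  rw [h.dn_sq, zetaChar, criticalZetaSq]
  field_simp
  rw [h.cn_sq, h.dn_sq]
  ring

theorem differentiable_kapWidth (h : IsJacobiTriple k sn cn dn) (hk : -1 < k) :
    Differentiable ℝ (kapWidth k sn cn dn) :=
  fun α => (h.hasDerivAt_kapWidth (h.one_add_mul_sn_sq_pos hk α).ne').differentiableAt

theorem deriv_kapWidth (h : IsJacobiTriple k sn cn dn) (hk : -1 < k) (α : ℝ) :
    deriv (kapWidth k sn cn dn) α = 2 * (zetaChar k sn α ^ 2 - criticalZetaSq k) :=
  (h.hasDerivAt_kapWidth (h.one_add_mul_sn_sq_pos hk α).ne').deriv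

theorem zetaChar_eq_sqrt_of_deriv_kapWidth_eq_zero (h : IsJacobiTriple k sn cn dn)
    (hk : k ∈ Ioo (-1 : ℝ) 1) {α : ℝ} (hα : deriv (kapWidth k sn cn dn) α = 0) :
    zetaChar k sn α = √(criticalZetaSq k) := by
  have hsq : zetaChar k sn α ^ 2 = criticalZetaSq k := by
    rw [h.deriv_kapWidth hk.1] at hα
    linarith
  rw [← hsq, sqrt_sq (h.zetaChar_pos hk α).le]

theorem strictAntiOn_deriv_kapWidth (h : IsJacobiTriple k sn cn dn) (hk : k ∈ Ioo (0 : ℝ) 1) :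
    StrictAntiOn (deriv (kapWidth k sn cn dn)) (Icc 0 (Kcomp k)) := by
  intro α hα β hβ hαβ
  have hk1 : -1 < k := neg_one_lt_zero.trans hk.1
  have hsq : zetaChar k sn β ^ 2 < zetaChar k sn α ^ 2 :=
    pow_lt_pow_left₀ (h.strictAntiOn_zetaChar hk hα hβ hαβ) (h.zetaChar_pos ⟨hk1, hk.2⟩ β).le
      two_ne_zero
  rw [h.deriv_kapWidth hk1, h.deriv_kapWidth hk1]
  linarith

theorem deriv_kapWidth_zero_pos (h : IsJacobiTriple k sn cn dn) (hk : k ∈ Ioo (0 : ℝ) 1) :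
    0 < deriv (kapWidth k sn cn dn) 0 := by
  rw [h.deriv_kapWidth (neg_one_lt_zero.trans hk.1), h.zetaChar_zero]
  linarith [(criticalZetaSq_mem_Ioo hk).2]

theorem deriv_kapWidth_Kcomp_neg (h : IsJacobiTriple k sn cn dn) (hk : k ∈ Ioo (0 : ℝ) 1) :
    deriv (kapWidth k sn cn dn) (Kcomp k) < 0 := by
  have hk1 : -1 < k := neg_one_lt_zero.trans hk.1
  rw [h.deriv_kapWidth hk1, h.zetaChar_Kcomp ⟨hk1, hk.2⟩]
  linarith [(criticalZetaSq_mem_Ioo hk).1]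

end IsJacobiTriple

/-- The inverse width `κ` is differentiable on `(0, K(k))`, has exactly one critical point
`α₀` there, at which `ζ(α₀) = √(E/(2K) − (1−k²)/4)`; `κ` attains its global maximum over
`(0, K(k))` at `α₀`, being strictly increasing on `(0, α₀)` and strictly decreasing
on `(α₀, K(k))`. -/
theorem inverse_width_maximum
    (k : ℝ) (hk : k ∈ Set.Ioo (0 : ℝ) 1)
    (sn cn dn : ℝ → ℝ)
    (hsn : ∀ x, HasDerivAt sn (cn x * dn x) x)
    (hcn : ∀ x, HasDerivAt cn (-(sn x * dn x)) x)
    (hdn : ∀ x, HasDerivAt dn (-(k ^ 2 * sn x * cn x)) x)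
    (hsn0 : sn 0 = 0) (hcn0 : cn 0 = 1) (hdn0 : dn 0 = 1) :
    DifferentiableOn ℝ (kapWidth k sn cn dn) (Set.Ioo 0 (Kcomp k)) ∧
    ∃ α₀ ∈ Set.Ioo 0 (Kcomp k),
      deriv (kapWidth k sn cn dn) α₀ = 0 ∧
      (∀ α ∈ Set.Ioo 0 (Kcomp k), deriv (kapWidth k sn cn dn) α = 0 → α = α₀) ∧
      zetaChar k sn α₀ = Real.sqrt (Ecomp k / (2 * Kcomp k) - (1 - k ^ 2) / 4) ∧
      (∀ α ∈ Set.Ioo 0 (Kcomp k), kapWidth k sn cn dn α ≤ kapWidth k sn cn dn α₀) ∧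
      StrictMonoOn (kapWidth k sn cn dn) (Set.Ioo 0 α₀) ∧
      StrictAntiOn (kapWidth k sn cn dn) (Set.Ioo α₀ (Kcomp k)) := by
  have h : IsJacobiTriple k sn cn dn := ⟨hsn, hcn, hdn, hsn0, hcn0, hdn0⟩
  have hk1 : -1 < k := neg_one_lt_zero.trans hk.1
  have hK : 0 < Kcomp k := Kcomp_pos (pow_lt_one₀ hk.1.le hk.2 two_ne_zero)
  have hdiff := h.differentiable_kapWidth hk1
  have hderiv := h.strictAntiOn_deriv_kapWidth hk
  obtain ⟨α₀, hα₀, hcrit, hmono, hanti⟩ := exists_deriv_eq_zero_strictMonoOn_strictAntiOn hK.le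
    (fun α _ => hdiff α) hderiv (h.deriv_kapWidth_zero_pos hk) (h.deriv_kapWidth_Kcomp_neg hk)
  have hmax := isMaxOn_Icc_of_monotoneOn_of_antitoneOn hmono.monotoneOn hanti.antitoneOn
  exact ⟨hdiff.differentiableOn, α₀, hα₀, hcrit,
    fun α hα hα' => hderiv.injOn (Ioo_subset_Icc_self hα) (Ioo_subset_Icc_self hα₀)
      (hα'.trans hcrit.symm),
    h.zetaChar_eq_sqrt_of_deriv_kapWidth_eq_zero ⟨hk1, hk.2⟩ hcrit,
    fun α hα => hmax (Ioo_subset_Icc_self hα),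
    hmono.mono Ioo_subset_Icc_self, hanti.mono Ioo_subset_Icc_self⟩

end
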